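/- arXiv:2310.00494 — 2 statements merged into one kernel-verified Lean document; each statement's English description precedes it below -/
import Mathlib

section
/- Let ε be any function from the (finite) set P^{h,cf}_d(K_{2d}) of homogeneous cycle-free edge d-partitions of K_{2d} to k, and define D_ε(A) = Σ_{Γ ∈ P^{h,cf}_d(K_{2d})} ε(Γ)·M_Γ(A) for d×d(2d-1) matrices A. Then D_ε(I^{S^2}_d) = ε(Γ^E), and for every S^2-upper triangular d×d(2d-1) matrix A one has D_ε(A) = D_ε(I^{S^2}_d) · ∏_{1 ≤ i < j ≤ 2d} A^{ind(i,j)}_{i,j}; that is, D_ε(A) equals D_ε(I^{S^2}_d) times the product of the S^2-diagonal of A. -/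
open SimpleGraph

/-- Vertices of `K_{2d}` are `Fin (2*d)`, with `v : Fin (2*d)` representing the
1-based vertex `v + 1`.  For `i < j`, `indF i j` is the 0-based version of the index
`ind(i+1, j+1)`, where (1-based) `ind(x,y) = ⌈x/2⌉` if `x + y` is even and `⌈y/2⌉` if
`x + y` is odd. -/
def indF {d : ℕ} (i j : Fin (2*d)) : Fin d :=
  if ((i : ℕ) + (j : ℕ)) % 2 = 0 then ⟨(i : ℕ) / 2, by have := i.isLt; omega⟩
  else ⟨(j : ℕ) / 2, by have := j.isLt; omega⟩

/-- Column indices of a `d × d(2d-1)` matrix: pairs `(i,j)` with `i < j` in `Fin (2*d)`. -/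
abbrev EdgePair (d : ℕ) := {p : Fin (2*d) × Fin (2*d) // p.1 < p.2}

def ind {d : ℕ} (e : EdgePair d) : Fin d := indF e.val.1 e.val.2

/-- An edge `d`-partition of `K_{2d}`: spanning subgraphs with pairwise disjoint edge
sets whose union is the edge set of the complete graph. -/
def IsEdgePartition {d : ℕ} (Γ : Fin d → SimpleGraph (Fin (2*d))) : Prop :=
  (∀ a b : Fin d, a ≠ b → Disjoint (Γ a).edgeSet (Γ b).edgeSet) ∧
  (⋃ a : Fin d, (Γ a).edgeSet) = (⊤ : SimpleGraph (Fin (2*d))).edgeSet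

/-- A homogeneous cycle-free edge `d`-partition of `K_{2d}`. -/
def IsHCFPartition {d : ℕ} (Γ : Fin d → SimpleGraph (Fin (2*d))) : Prop :=
  IsEdgePartition Γ ∧ (∀ a b : Fin d, (Γ a).edgeSet.ncard = (Γ b).edgeSet.ncard) ∧
  (∀ a : Fin d, (Γ a).IsAcyclic)

/-- The edge `d`-partition `Γ^E` associated with `E^{(2)}_d`:
`E(Γ^E_a) = {(i,j) : i < j, ind(i,j) = a}`. -/
def GammaE (d : ℕ) (a : Fin d) : SimpleGraph (Fin (2*d)) :=
  SimpleGraph.fromEdgeSet {e | ∃ i j : Fin (2*d), i < j ∧ indF i j = a ∧ e = s(i,j)}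

-- The monomial `M_Γ(A) = ∏_{a=1}^d ∏_{(i,j) ∈ E(Γ_a)} A^a_{i,j}`.
open scoped Classical in
noncomputable def MGamma {d : ℕ} {k : Type*} [Field k]
    (Γ : Fin d → SimpleGraph (Fin (2*d))) (A : Fin d → EdgePair d → k) : k :=
  ∏ a : Fin d, ∏ e : EdgePair d, if (Γ a).Adj e.val.1 e.val.2 then A a e else 1

/-- `A` is `S²`-upper triangular: entries strictly below the `S²`-diagonal vanish. -/
def S2UpperTriangular {d : ℕ} {k : Type*} [Field k] (A : Fin d → EdgePair d → k) : Prop :=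
  ∀ (r : Fin d) (e : EdgePair d), ind e < r → A r e = 0

/-- `A` is `S²`-lower triangular: entries strictly above the `S²`-diagonal vanish. -/
def S2LowerTriangular {d : ℕ} {k : Type*} [Field k] (A : Fin d → EdgePair d → k) : Prop :=
  ∀ (r : Fin d) (e : EdgePair d), r < ind e → A r e = 0

/-- The matrix form `I^{S²}_d` of `E^{(2)}_d`. -/
def IS2 (d : ℕ) (k : Type*) [Field k] : Fin d → EdgePair d → k :=
  fun r e => if r = ind e then 1 else 0

-- `D_ε(A) = Σ_{Γ ∈ P^{h,cf}_d(K_{2d})} ε(Γ)·M_Γ(A)`.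
open scoped Classical in
noncomputable def Deps {d : ℕ} {k : Type*} [Field k]
    (ε : (Fin d → SimpleGraph (Fin (2*d))) → k) (A : Fin d → EdgePair d → k) : k :=
  ∑ Γ ∈ Finset.univ.filter (fun Γ : Fin d → SimpleGraph (Fin (2*d)) => IsHCFPartition Γ),
    ε Γ * MGamma Γ A

open scoped Classical in
theorem hcf_ncard_edge {d : ℕ} (G : SimpleGraph (Fin (2*d))) :
    G.edgeSet.ncard = (Finset.univ.filter (fun e : EdgePair d => G.Adj e.val.1 e.val.2)).card := by
  rw [← Set.ncard_coe_finset]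
  symm
  refine Set.ncard_congr (fun e _ => s(e.val.1, e.val.2)) ?_ ?_ ?_
  · intro e he
    simpa using he
  · rintro ⟨⟨i, j⟩, hij⟩ ⟨⟨i', j'⟩, hij'⟩ _ _ h
    simp only [Sym2.eq_iff] at h
    simp only at hij hij'
    rcases h with ⟨rfl, rfl⟩ | ⟨rfl, rfl⟩
    · rfl
    · exact absurd hij (lt_asymm hij')
  · intro b
    induction b using Sym2.ind with
    | _ x y =>
      intro hb
      have hb' : G.Adj x y := hb
      rcases lt_or_gt_of_ne hb'.ne with h | h
      · exact ⟨⟨(x, y), h⟩, by simpa using hb', rfl⟩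
      · exact ⟨⟨(y, x), h⟩, by simpa using hb'.symm, Sym2.eq_swap⟩

theorem gammaE_adj_of_lt {d : ℕ} (a : Fin d) {i j : Fin (2*d)} (h : i < j) :
    (GammaE d a).Adj i j ↔ indF i j = a := by
  unfold GammaE
  rw [SimpleGraph.fromEdgeSet_adj]
  constructor
  · rintro ⟨⟨i', j', hlt, hi, he⟩, _⟩
    rcases Sym2.eq_iff.1 he with ⟨rfl, rfl⟩ | ⟨rfl, rfl⟩
    · exact hi
    · exact absurd h (lt_asymm hlt)
  · intro hi
    exact ⟨⟨i, j, h, hi, rfl⟩, h.ne⟩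

theorem card_edgePair (d : ℕ) : Fintype.card (EdgePair d) = d * (2*d - 1) := by
  classical
  have h := hcf_ncard_edge (⊤ : SimpleGraph (Fin (2*d)))
  have h2 : (⊤ : SimpleGraph (Fin (2*d))).edgeSet.ncard = d * (2*d-1) := by
    rw [← SimpleGraph.coe_edgeFinset, Set.ncard_coe_finset, SimpleGraph.card_edgeFinset_top_eq_card_choose_two,
      Fintype.card_fin, Nat.choose_two_right, Nat.mul_assoc, Nat.mul_div_cancel_left _ (by norm_num)]
  rw [← h2, h, ← Finset.card_univ]
  refine congrArg Finset.card ?_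
  ext e
  simpa using e.2.ne

theorem gammaE_connected {d : ℕ} (a : Fin d) : (GammaE d a).Connected := by
  have ha := a.isLt
  let u : Fin (2*d) := ⟨2*a, by omega⟩
  let w : Fin (2*d) := ⟨2*a+1, by omega⟩
  have huw : (GammaE d a).Adj u w := by
    rw [gammaE_adj_of_lt a (Fin.lt_def.2 (by simp only [u, w]; omega))]
    ext
    simp only [indF, u, w]
    split_ifs <;> simp <;> omega
  have key : ∀ v : Fin (2*d), (GammaE d a).Reachable v u := by
    intro v
    by_cases h1 : (v : ℕ) = 2*a
    · have : v = u := Fin.ext h1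
      rw [this]
    by_cases h2 : (v : ℕ) = 2*a+1
    · have : v = w := Fin.ext h2
      rw [this]
      exact huw.symm.reachable
    by_cases hlt : (v : ℕ) < 2*a
    · by_cases hp : (v : ℕ) % 2 = 0
      · have : (GammaE d a).Adj v w := by
          rw [gammaE_adj_of_lt a (Fin.lt_def.2 (by simp only [w]; omega))]
          ext
          simp only [indF, w]
          split_ifs <;> simp <;> omega
        exact this.reachable.trans huw.symm.reachable
      · have : (GammaE d a).Adj v u := by
          rw [gammaE_adj_of_lt a (Fin.lt_def.2 (by simp only [u]; omega))]
          ext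
          simp only [indF, u]
          split_ifs <;> simp <;> omega
        exact this.reachable
    · by_cases hp : (v : ℕ) % 2 = 0
      · have : (GammaE d a).Adj u v := by
          rw [gammaE_adj_of_lt a (Fin.lt_def.2 (by simp only [u]; omega))]
          ext
          simp only [indF, u]
          split_ifs <;> simp <;> omega
        exact this.symm.reachable
      · have : (GammaE d a).Adj w v := by
          rw [gammaE_adj_of_lt a (Fin.lt_def.2 (by simp only [w]; omega))]
          ext
          simp only [indF, w]
          split_ifs <;> simp <;> omega
        exact this.symm.reachable.trans huw.symm.reachable
  haveI : Nonempty (Fin (2*d)) := ⟨u⟩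
  exact ⟨fun x y => (key x).trans (key y).symm⟩

open scoped Classical in
theorem card_ind_fiber {d : ℕ} (a : Fin d) :
    (Finset.univ.filter (fun e : EdgePair d => ind e = a)).card = 2*d - 1 := by
  have hge : ∀ a : Fin d, 2*d - 1 ≤
      (Finset.univ.filter (fun e : EdgePair d => ind e = a)).card := by
    intro a
    have h := (gammaE_connected a).card_vert_le_card_edgeSet_add_one
    rw [Nat.card_eq_fintype_card, Fintype.card_fin, Nat.card_coe_set_eq, hcf_ncard_edge] at h
    have : (Finset.univ.filter (fun e : EdgePair d => (GammaE d a).Adj e.val.1 e.val.2))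
        = Finset.univ.filter (fun e : EdgePair d => ind e = a) :=
      Finset.filter_congr (fun e _ => gammaE_adj_of_lt a e.2)
    rw [this] at h
    omega
  have hsum : ∑ _a : Fin d, (2*d-1) =
      ∑ a : Fin d, (Finset.univ.filter (fun e : EdgePair d => ind e = a)).card := by
    rw [← Finset.card_eq_sum_card_fiberwise (fun e _ => Finset.mem_coe.2 (Finset.mem_univ _)),
      Finset.card_univ, card_edgePair]
    simp
  exact ((Finset.sum_eq_sum_iff_of_le (fun a _ => hge a)).1 hsum a (Finset.mem_univ a)).symm

theorem gammaE_ncard {d : ℕ} (a : Fin d) : (GammaE d a).edgeSet.ncard = 2*d - 1 := by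
  classical
  rw [hcf_ncard_edge, ← card_ind_fiber a]
  exact congrArg Finset.card (Finset.filter_congr (fun e _ => gammaE_adj_of_lt a e.2))

theorem gammaE_hcf (d : ℕ) : IsHCFPartition (fun a : Fin d => GammaE d a) := by
  refine ⟨⟨?_, ?_⟩, ?_, ?_⟩
  · intro a b hab
    rw [Set.disjoint_left]
    intro e
    induction e using Sym2.ind with
    | _ x y =>
      intro h1 h2
      have h1 : (GammaE d a).Adj x y := h1
      have h2 : (GammaE d b).Adj x y := h2
      rcases lt_or_gt_of_ne h1.ne with h | h
      · exact hab (((gammaE_adj_of_lt a h).1 h1).symm.trans ((gammaE_adj_of_lt b h).1 h2))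
      · exact hab (((gammaE_adj_of_lt a h).1 h1.symm).symm.trans ((gammaE_adj_of_lt b h).1 h2.symm))
  · ext e
    induction e using Sym2.ind with
    | _ x y =>
      simp only [Set.mem_iUnion, SimpleGraph.mem_edgeSet, SimpleGraph.top_adj]
      constructor
      · rintro ⟨a, h⟩
        exact h.ne
      · intro hne
        rcases lt_or_gt_of_ne hne with h | h
        · exact ⟨_, (gammaE_adj_of_lt _ h).2 rfl⟩
        · exact ⟨_, ((gammaE_adj_of_lt _ h).2 rfl).symm⟩
  · intro a b
    rw [gammaE_ncard, gammaE_ncard]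
  · intro a
    have ha := a.isLt
    refine IsTree.isAcyclic (SimpleGraph.isTree_iff_connected_and_card.2 ⟨gammaE_connected a, ?_⟩)
    rw [Nat.card_coe_set_eq, gammaE_ncard, Nat.card_eq_fintype_card, Fintype.card_fin]
    omega

theorem hcf_unique {d : ℕ} (Γ : Fin d → SimpleGraph (Fin (2*d))) (hΓ : IsHCFPartition Γ)
    (hle : ∀ (a : Fin d) (e : EdgePair d), (Γ a).Adj e.val.1 e.val.2 → a ≤ ind e) :
    Γ = fun a => GammaE d a := by
  classical
  obtain ⟨⟨hdis, hun⟩, hhom, -⟩ := hΓ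
  have hex : ∀ e : EdgePair d, ∃ a, (Γ a).Adj e.val.1 e.val.2 := by
    intro e
    have : s(e.val.1, e.val.2) ∈ ⋃ a : Fin d, (Γ a).edgeSet := by
      rw [hun]
      exact e.2.ne
    simpa using this
  choose c hc using hex
  have hiff : ∀ (a : Fin d) (e : EdgePair d), (Γ a).Adj e.val.1 e.val.2 ↔ c e = a := by
    intro a e
    constructor
    · intro h
      by_contra hne
      have h1 : s(e.val.1, e.val.2) ∈ (Γ (c e)).edgeSet := hc e
      have h2 : s(e.val.1, e.val.2) ∈ (Γ a).edgeSet := h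
      exact Set.disjoint_left.1 (hdis _ _ hne) h1 h2
    · rintro rfl
      exact hc e
  have hfib : ∀ a, (Finset.univ.filter (fun e : EdgePair d => c e = a)).card
      = (Γ a).edgeSet.ncard := by
    intro a
    rw [hcf_ncard_edge]
    exact congrArg Finset.card (Finset.filter_congr (fun e _ => (hiff a e).symm))
  have hcard : ∀ a, (Finset.univ.filter (fun e : EdgePair d => c e = a)).card = 2*d-1 := by
    intro a
    have h1 : Fintype.card (EdgePair d) =
        ∑ b : Fin d, (Finset.univ.filter (fun e : EdgePair d => c e = b)).card := by
      rw [← Finset.card_eq_sum_card_fiberwise (fun e _ => Finset.mem_coe.2 (Finset.mem_univ _)),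
        Finset.card_univ]
    rw [card_edgePair, Finset.sum_congr rfl (fun b _ => (hfib b).trans (hhom b a))] at h1
    simp only [Finset.sum_const, Finset.card_univ, Fintype.card_fin, smul_eq_mul] at h1
    rw [hfib]
    exact (Nat.eq_of_mul_eq_mul_left (by have := a.isLt; omega) h1).symm
  have hs : ∀ f : EdgePair d → Fin d,
      (∀ a, (Finset.univ.filter (fun e : EdgePair d => f e = a)).card = 2*d-1) →
      ∑ e, (f e : ℕ) = ∑ a : Fin d, (2*d-1) * (a : ℕ) := by
    intro f hf
    rw [← Finset.sum_fiberwise_of_maps_to (s := Finset.univ) (t := Finset.univ) (g := f)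
      (f := fun e => (f e : ℕ)) (fun e _ => Finset.mem_univ _)]
    refine Finset.sum_congr rfl (fun a _ => ?_)
    rw [Finset.sum_congr rfl (g := fun _ => (a : ℕ)), Finset.sum_const, hf, smul_eq_mul]
    intro e he
    rw [(Finset.mem_filter.1 he).2]
  have hsum : ∑ e, (c e : ℕ) = ∑ e : EdgePair d, (ind e : ℕ) := by
    rw [hs c hcard, hs ind card_ind_fiber]
  have heq : ∀ e, c e = ind e := fun e => Fin.ext
    ((Finset.sum_eq_sum_iff_of_le (f := fun e => (c e : ℕ)) (g := fun e => (ind e : ℕ))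
      (fun e _ => Fin.le_def.1 (hle _ e (hc e)))).1 hsum e (Finset.mem_univ e))
  have hlt : ∀ (a : Fin d) (x y : Fin (2*d)), x < y →
      ((Γ a).Adj x y ↔ (GammaE d a).Adj x y) := by
    intro a x y h
    rw [gammaE_adj_of_lt a h]
    have h1 := hiff a ⟨(x, y), h⟩
    rw [heq] at h1
    exact h1
  funext a
  ext x y
  rcases lt_trichotomy x y with h | h | h
  · exact hlt a x y h
  · subst h
    simp
  · rw [SimpleGraph.adj_comm, hlt a y x h, SimpleGraph.adj_comm]

theorem MGamma_gammaE {d : ℕ} {k : Type*} [Field k] (A : Fin d → EdgePair d → k) :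
    MGamma (fun a : Fin d => GammaE d a) A = ∏ e : EdgePair d, A (ind e) e := by
  classical
  unfold MGamma
  rw [Finset.prod_comm]
  refine Finset.prod_congr rfl (fun e _ => ?_)
  rw [Finset.prod_eq_single (ind e)]
  · exact if_pos ((gammaE_adj_of_lt _ e.2).2 rfl)
  · intro b _ hb
    exact if_neg (fun h => hb ((gammaE_adj_of_lt _ e.2).1 h).symm)
  · intro h
    exact absurd (Finset.mem_univ _) h

theorem Deps_upper_aux {d : ℕ} {k : Type*} [Field k]
    (ε : (Fin d → SimpleGraph (Fin (2*d))) → k) (A : Fin d → EdgePair d → k)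
    (hA : S2UpperTriangular A) :
    Deps ε A = ε (fun a : Fin d => GammaE d a) * ∏ e : EdgePair d, A (ind e) e := by
  classical
  unfold Deps
  rw [Finset.sum_eq_single (fun a : Fin d => GammaE d a), MGamma_gammaE]
  · intro Γ hΓ hne
    have hΓ := (Finset.mem_filter.1 hΓ).2
    have : ∃ (a : Fin d) (e : EdgePair d), (Γ a).Adj e.val.1 e.val.2 ∧ ind e < a := by
      by_contra hcon
      push Not at hcon
      exact hne (hcf_unique Γ hΓ hcon)
    obtain ⟨a, e, hadj, hlt⟩ := this
    have hz : MGamma Γ A = 0 := by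
      unfold MGamma
      refine Finset.prod_eq_zero (Finset.mem_univ a) (Finset.prod_eq_zero (Finset.mem_univ e) ?_)
      rw [if_pos hadj, hA a e hlt]
    rw [hz, mul_zero]
  · intro h
    exact absurd (Finset.mem_filter.2 ⟨Finset.mem_univ _, gammaE_hcf d⟩) h

/-- For any ε : P^{h,cf}_d(K_{2d}) → k, one has D_ε(I^{S²}_d) = ε(Γ^E), and for every
S²-upper triangular A, D_ε(A) = D_ε(I^{S²}_d) · (product of the S²-diagonal of A). -/
theorem Deps_upper_triangular (k : Type*) [Field k] (d : ℕ) (hd : 1 ≤ d)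
    (ε : (Fin d → SimpleGraph (Fin (2*d))) → k) :
    Deps ε (IS2 d k) = ε (fun a : Fin d => GammaE d a) ∧
    ∀ A : Fin d → EdgePair d → k, S2UpperTriangular A →
      Deps ε A = Deps ε (IS2 d k) * ∏ e : EdgePair d, A (ind e) e := by
  have h1 : Deps ε (IS2 d k) = ε (fun a : Fin d => GammaE d a) := by
    rw [Deps_upper_aux ε (IS2 d k) (fun r e h => if_neg h.ne')]
    simp [IS2]
  refine ⟨h1, fun A hA => ?_⟩
  rw [h1, Deps_upper_aux ε A hA]
end

section
/- Let A be a d×d(2d-1) matrix over k such that every leg submatrix of A (that is, A^C and A^L_n, A^R_n for 1 ≤ n ≤ d-1) has all of its leading principal minors nonzero (the determinant of the top-left r×r submatrix is nonzero for every 1 ≤ r ≤ d). Then there exist an S^2-lower triangular matrix L, which may be chosen so that every entry of its S^2-diagonal equals 1, and an S^2-upper triangular matrix U such that A = L⊙U. -/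
def mkEdge {d : ℕ} (i j : ℕ) (hi : i < 2*d) (hj : j < 2*d) (hij : i < j) : EdgePair d :=
  ⟨(⟨i, hi⟩, ⟨j, hj⟩), Fin.mk_lt_mk.mpr hij⟩

/-- The central edge `(2a-1, 2a)` of the twin star `TS_d(2a-1, 2a)` (0-based `a`). -/
def centerEdge {d : ℕ} (a : Fin d) : EdgePair d :=
  mkEdge (2*a) (2*a+1) (by have := a.isLt; omega) (by have := a.isLt; omega) (by omega)

/-- The left leg of the twin star `TS_d(2a-1, 2a)` with leg number `n + 1`
(both `a` and `n` 0-based): left legs are enumerated in increasing order of their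
endpoint different from `2a - 1`. -/
def leftLeg {d : ℕ} (a : Fin d) (n : Fin (d-1)) : EdgePair d :=
  if h : (n : ℕ) < (a : ℕ) then
    mkEdge (2*n+1) (2*a) (by have := n.isLt; omega) (by have := a.isLt; omega) (by omega)
  else
    mkEdge (2*a) (2*n+2) (by have := a.isLt; omega) (by have := n.isLt; omega) (by omega)

/-- The right leg of the twin star `TS_d(2a-1, 2a)` with leg number `n + 1`
(both `a` and `n` 0-based): right legs are enumerated in increasing order of their
endpoint different from `2a`. -/
def rightLeg {d : ℕ} (a : Fin d) (n : Fin (d-1)) : EdgePair d :=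
  if h : (n : ℕ) < (a : ℕ) then
    mkEdge (2*n) (2*a+1) (by have := n.isLt; omega) (by have := a.isLt; omega) (by omega)
  else
    mkEdge (2*a+1) (2*n+3) (by have := a.isLt; omega) (by have := n.isLt; omega) (by omega)

/-- The central leg submatrix `A^C`: its `a`-th column is the column of `A` indexed by
`(2a-1, 2a)`. -/
def legC {d : ℕ} {k : Type*} [Field k] (A : Fin d → EdgePair d → k) :
    Matrix (Fin d) (Fin d) k :=
  Matrix.of fun r a => A r (centerEdge a)

/-- The left leg submatrix `A^L_n`: its `a`-th column is the column of `A` indexed by the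
left leg of `TS_d(2a-1, 2a)` with leg number `n`. -/
def legL {d : ℕ} {k : Type*} [Field k] (A : Fin d → EdgePair d → k) (n : Fin (d-1)) :
    Matrix (Fin d) (Fin d) k :=
  Matrix.of fun r a => A r (leftLeg a n)

/-- The right leg submatrix `A^R_n`: its `a`-th column is the column of `A` indexed by the
right leg of `TS_d(2a-1, 2a)` with leg number `n`. -/
def legR {d : ℕ} {k : Type*} [Field k] (A : Fin d → EdgePair d → k) (n : Fin (d-1)) :
    Matrix (Fin d) (Fin d) k :=
  Matrix.of fun r a => A r (rightLeg a n)

/-- The Leg Identifying Multiplication `A ⊙ B`: each column, indexed by an edge `e` of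
`K_{2d}`, is classified as the central edge, a left leg, or a right leg (with its leg
number `n`) of the twin star it belongs to, say `TS_d(2a-1,2a)`; the corresponding column
of `A ⊙ B` is the `a`-th column of the ordinary matrix product of the corresponding leg
submatrices of `A` and `B`. -/
def LIM {d : ℕ} {k : Type*} [Field k] (A B : Fin d → EdgePair d → k) :
    Fin d → EdgePair d → k := fun r e =>
  have hij : (e.val.1 : ℕ) < (e.val.2 : ℕ) := e.prop
  have hi : (e.val.1 : ℕ) < 2*d := e.val.1.isLt
  have hj : (e.val.2 : ℕ) < 2*d := e.val.2.isLt
  if h1 : (e.val.1 : ℕ) % 2 = 0 then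
    if h2 : (e.val.2 : ℕ) % 2 = 1 then
      if h3 : (e.val.2 : ℕ) = (e.val.1 : ℕ) + 1 then
        -- the central edge (2a-1, 2a) with (0-based) a = i/2
        (legC A * legC B) r ⟨(e.val.1 : ℕ) / 2, by omega⟩
      else
        -- a right leg (2a'-1, 2a) : star (0-based) a = j/2, leg number (0-based) i/2
        (legR A ⟨(e.val.1 : ℕ) / 2, by omega⟩ * legR B ⟨(e.val.1 : ℕ) / 2, by omega⟩)
          r ⟨(e.val.2 : ℕ) / 2, by omega⟩
    else
      -- a left leg (2a-1, 2c-1) : star (0-based) a = i/2, leg number (0-based) j/2 - 1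
      (legL A ⟨(e.val.2 : ℕ) / 2 - 1, by omega⟩ * legL B ⟨(e.val.2 : ℕ) / 2 - 1, by omega⟩)
        r ⟨(e.val.1 : ℕ) / 2, by omega⟩
  else
    if h2 : (e.val.2 : ℕ) % 2 = 0 then
      -- a left leg (2a', 2a-1) : star (0-based) a = j/2, leg number (0-based) i/2
      (legL A ⟨(e.val.1 : ℕ) / 2, by omega⟩ * legL B ⟨(e.val.1 : ℕ) / 2, by omega⟩)
        r ⟨(e.val.2 : ℕ) / 2, by omega⟩
    else
      -- a right leg (2a, 2c) : star (0-based) a = i/2, leg number (0-based) j/2 - 1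
      (legR A ⟨(e.val.2 : ℕ) / 2 - 1, by omega⟩ * legR B ⟨(e.val.2 : ℕ) / 2 - 1, by omega⟩)
        r ⟨(e.val.1 : ℕ) / 2, by omega⟩

/-- All leading principal minors of a d×d matrix are nonzero: for every 1 ≤ r ≤ d,
the determinant of the top-left r×r submatrix is nonzero. -/
def LeadingMinorsNonzero {d : ℕ} {k : Type*} [Field k] (M : Matrix (Fin d) (Fin d) k) :
    Prop :=
  ∀ (r : ℕ), 1 ≤ r → ∀ (h : r ≤ d), (M.submatrix (Fin.castLE h) (Fin.castLE h)).det ≠ 0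

/-- Assemble a `d × d(2d-1)` matrix from its leg submatrices. -/
def glue {d : ℕ} {k : Type*} (C : Matrix (Fin d) (Fin d) k)
    (P Q : Fin (d-1) → Matrix (Fin d) (Fin d) k) :
    Fin d → EdgePair d → k := fun r e =>
  have hij : (e.val.1 : ℕ) < (e.val.2 : ℕ) := e.prop
  have hi : (e.val.1 : ℕ) < 2*d := e.val.1.isLt
  have hj : (e.val.2 : ℕ) < 2*d := e.val.2.isLt
  if h1 : (e.val.1 : ℕ) % 2 = 0 then
    if h2 : (e.val.2 : ℕ) % 2 = 1 then
      if h3 : (e.val.2 : ℕ) = (e.val.1 : ℕ) + 1 then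
        C r ⟨(e.val.1 : ℕ) / 2, by omega⟩
      else
        Q ⟨(e.val.1 : ℕ) / 2, by omega⟩ r ⟨(e.val.2 : ℕ) / 2, by omega⟩
    else
      P ⟨(e.val.2 : ℕ) / 2 - 1, by omega⟩ r ⟨(e.val.1 : ℕ) / 2, by omega⟩
  else
    if h2 : (e.val.2 : ℕ) % 2 = 0 then
      P ⟨(e.val.1 : ℕ) / 2, by omega⟩ r ⟨(e.val.2 : ℕ) / 2, by omega⟩
    else
      Q ⟨(e.val.2 : ℕ) / 2 - 1, by omega⟩ r ⟨(e.val.1 : ℕ) / 2, by omega⟩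

theorem LIM_eq_glue {d : ℕ} {k : Type*} [Field k] (A B : Fin d → EdgePair d → k) :
    LIM A B = glue (legC A * legC B) (fun n => legL A n * legL B n)
      (fun n => legR A n * legR B n) := rfl

theorem glue_center {d : ℕ} {k : Type*} (C : Matrix (Fin d) (Fin d) k)
    (P Q : Fin (d-1) → Matrix (Fin d) (Fin d) k) (r a : Fin d) :
    glue C P Q r (centerEdge a) = C r a := by
  unfold glue centerEdge mkEdge
  simp only
  rw [dif_pos (by omega), dif_pos (by omega), dif_pos trivial]
  congr 1
  ext
  simp

theorem glue_left {d : ℕ} {k : Type*} (C : Matrix (Fin d) (Fin d) k)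
    (P Q : Fin (d-1) → Matrix (Fin d) (Fin d) k) (r a : Fin d) (n : Fin (d-1)) :
    glue C P Q r (leftLeg a n) = P n r a := by
  unfold leftLeg
  split_ifs with h
  all_goals
    unfold glue mkEdge
    simp only
  · rw [dif_neg (by omega), dif_pos (by omega)]
    congr 2 <;> (try congr 1) <;> first | omega | (ext; simp only; omega)
  · rw [dif_pos (by omega), dif_neg (by omega)]
    congr 2 <;> (try congr 1) <;> first | omega | (ext; simp only; omega)

theorem glue_right {d : ℕ} {k : Type*} (C : Matrix (Fin d) (Fin d) k)
    (P Q : Fin (d-1) → Matrix (Fin d) (Fin d) k) (r a : Fin d) (n : Fin (d-1)) :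
    glue C P Q r (rightLeg a n) = Q n r a := by
  unfold rightLeg
  split_ifs with h
  all_goals
    unfold glue mkEdge
    simp only
  · rw [dif_pos (by omega), dif_pos (by omega), dif_neg (by omega)]
    congr 2 <;> (try congr 1) <;> first | omega | (ext; simp only; omega)
  · rw [dif_neg (by omega), dif_neg (by omega)]
    congr 2 <;> (try congr 1) <;> first | omega | (ext; simp only; omega)

theorem edge_cases {d : ℕ} (e : EdgePair d) :
    (∃ a, e = centerEdge a) ∨ (∃ a n, e = leftLeg a n) ∨ (∃ a n, e = rightLeg a n) := by
  obtain ⟨⟨⟨i, hi⟩, ⟨j, hj⟩⟩, hij⟩ := e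
  have hij' : i < j := hij
  by_cases h1 : i % 2 = 0
  · by_cases h2 : j % 2 = 1
    · by_cases h3 : j = i + 1
      · left
        refine ⟨⟨i/2, by omega⟩, ?_⟩
        simp only [centerEdge, mkEdge, Subtype.mk.injEq, Prod.mk.injEq, Fin.mk.injEq]
        omega
      · right; right
        refine ⟨⟨j/2, by omega⟩, ⟨i/2, by omega⟩, ?_⟩
        rw [rightLeg, dif_pos (by simp only; omega)]
        simp only [mkEdge, Subtype.mk.injEq, Prod.mk.injEq, Fin.mk.injEq]
        omega
    · right; left
      refine ⟨⟨i/2, by omega⟩, ⟨j/2-1, by omega⟩, ?_⟩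
      rw [leftLeg, dif_neg (by simp only; omega)]
      simp only [mkEdge, Subtype.mk.injEq, Prod.mk.injEq, Fin.mk.injEq]
      omega
  · by_cases h2 : j % 2 = 0
    · right; left
      refine ⟨⟨j/2, by omega⟩, ⟨i/2, by omega⟩, ?_⟩
      rw [leftLeg, dif_pos (by simp only; omega)]
      simp only [mkEdge, Subtype.mk.injEq, Prod.mk.injEq, Fin.mk.injEq]
      omega
    · right; right
      refine ⟨⟨i/2, by omega⟩, ⟨j/2-1, by omega⟩, ?_⟩
      rw [rightLeg, dif_neg (by simp only; omega)]
      simp only [mkEdge, Subtype.mk.injEq, Prod.mk.injEq, Fin.mk.injEq]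
      omega

theorem ind_center {d : ℕ} (a : Fin d) : ind (centerEdge a) = a := by
  unfold ind indF centerEdge mkEdge
  simp only
  rw [if_neg (by omega)]
  ext
  simp only
  omega

theorem ind_left {d : ℕ} (a : Fin d) (n : Fin (d-1)) : ind (leftLeg a n) = a := by
  unfold ind indF leftLeg
  split_ifs with h h' h' <;> simp only [mkEdge] at h' ⊢ <;> first | omega | (ext; simp only; omega)

theorem ind_right {d : ℕ} (a : Fin d) (n : Fin (d-1)) : ind (rightLeg a n) = a := by
  unfold ind indF rightLeg
  split_ifs with h h' h' <;> simp only [mkEdge] at h' ⊢ <;> first | omega | (ext; simp only; omega)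

/-- The classical LU decomposition. -/
theorem exists_LU {k : Type*} [Field k] : ∀ (d : ℕ) (M : Matrix (Fin d) (Fin d) k),
    LeadingMinorsNonzero M → ∃ L U : Matrix (Fin d) (Fin d) k,
      (∀ i j, i < j → L i j = 0) ∧ (∀ i, L i i = 1) ∧ (∀ i j, j < i → U i j = 0) ∧
      M = L * U
  | 0, M, _ => ⟨0, 0, fun i => i.elim0, fun i => i.elim0, fun i => i.elim0,
      by ext i; exact i.elim0⟩
  | d+1, M, hM => by
    set M' : Matrix (Fin d) (Fin d) k := M.submatrix Fin.castSucc Fin.castSucc with hM'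
    have hlead : LeadingMinorsNonzero M' := fun r hr h => hM r hr (by omega)
    obtain ⟨L, U, hl, h1, hu, hLU⟩ := exists_LU d M' hlead
    have hdet : M'.det ≠ 0 := by
      rcases Nat.eq_zero_or_pos d with rfl | hd
      · simp
      · exact hlead d hd le_rfl
    rw [hLU, Matrix.det_mul] at hdet
    have hLd : IsUnit L.det := (left_ne_zero_of_mul hdet).isUnit
    have hUd : IsUnit U.det := (right_ne_zero_of_mul hdet).isUnit
    let b : Fin d → k := fun i => M i.castSucc (Fin.last d)
    let c : Fin d → k := fun j => M (Fin.last d) j.castSucc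
    let x : Fin d → k := Matrix.vecMul c U⁻¹
    let y : Fin d → k := Matrix.mulVec L⁻¹ b
    have hx : Matrix.vecMul x U = c := by
      simp [x, Matrix.vecMul_vecMul, Matrix.nonsing_inv_mul _ hUd]
    have hy : Matrix.mulVec L y = b := by
      simp [y, Matrix.mulVec_mulVec, Matrix.mul_nonsing_inv _ hLd]
    refine ⟨Matrix.of (Fin.snoc (α := fun _ => Fin (d+1) → k)
        (fun i => Fin.snoc (α := fun _ => k) (L i) 0) (Fin.snoc (α := fun _ => k) x 1)),
      Matrix.of (Fin.snoc (α := fun _ => Fin (d+1) → k)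
        (fun i => Fin.snoc (α := fun _ => k) (U i) (y i))
        (Fin.snoc (α := fun _ => k) 0 (M (Fin.last d) (Fin.last d) - ∑ i, x i * y i))),
      ?_, ?_, ?_, ?_⟩
    · intro i j
      refine Fin.lastCases ?_ (fun i => ?_) i <;> refine Fin.lastCases ?_ (fun j => ?_) j
      · simp
      · intro h; exact absurd h (not_lt.2 (Fin.le_last _))
      · simp
      · intro h; simpa using hl i j (by simpa using h)
    · intro i
      refine Fin.lastCases ?_ (fun i => ?_) i
      · simp
      · simpa using h1 i
    · intro i j
      refine Fin.lastCases ?_ (fun i => ?_) i <;> refine Fin.lastCases ?_ (fun j => ?_) j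
      · simp
      · simp
      · intro h; exact absurd h (not_lt.2 (Fin.le_last _))
      · intro h; simpa using hu i j (by simpa using h)
    · ext i j
      rw [Matrix.mul_apply, Fin.sum_univ_castSucc]
      refine Fin.lastCases ?_ (fun i => ?_) i <;> refine Fin.lastCases ?_ (fun j => ?_) j
      · simp
      · have := congrFun hx j
        simp only [Matrix.vecMul, dotProduct] at this
        simp [this, c]
      · have := congrFun hy i
        simp only [Matrix.mulVec, dotProduct] at this
        simp [this, b]
      · have := congrFun (congrFun hLU i) j
        rw [Matrix.mul_apply] at this
        simp [← this, hM']

/-- S²-LU decomposition: if every leg submatrix of A has all leading principal minors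
nonzero, then A = L ⊙ U with L an S²-lower triangular matrix whose S²-diagonal entries
all equal 1 and U an S²-upper triangular matrix. -/
theorem s2_LU_decomposition (k : Type*) [Field k] (d : ℕ) (hd : 1 ≤ d)
    (A : Fin d → EdgePair d → k)
    (hC : LeadingMinorsNonzero (legC A))
    (hL : ∀ n : Fin (d-1), LeadingMinorsNonzero (legL A n))
    (hR : ∀ n : Fin (d-1), LeadingMinorsNonzero (legR A n)) :
    ∃ L U : Fin d → EdgePair d → k,
      S2LowerTriangular L ∧ (∀ e : EdgePair d, L (ind e) e = 1) ∧
      S2UpperTriangular U ∧ A = LIM L U := by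
  choose LC UC hC1 hC2 hC3 hC4 using exists_LU d _ hC
  choose LL UL hL1 hL2 hL3 hL4 using fun n => exists_LU d _ (hL n)
  choose LR UR hR1 hR2 hR3 hR4 using fun n => exists_LU d _ (hR n)
  have eC : ∀ (C : Matrix (Fin d) (Fin d) k) P Q, legC (glue C P Q) = C := by
    intro C P Q; ext r a; exact glue_center C P Q r a
  have eL : ∀ (C : Matrix (Fin d) (Fin d) k) P Q n, legL (glue C P Q) n = P n := by
    intro C P Q n; ext r a; exact glue_left C P Q r a n
  have eR : ∀ (C : Matrix (Fin d) (Fin d) k) P Q n, legR (glue C P Q) n = Q n := by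
    intro C P Q n; ext r a; exact glue_right C P Q r a n
  refine ⟨glue LC LL LR, glue UC UL UR, ?_, ?_, ?_, ?_⟩
  · intro r e
    rcases edge_cases e with ⟨a, rfl⟩ | ⟨a, n, rfl⟩ | ⟨a, n, rfl⟩
    · rw [ind_center, glue_center]; exact hC1 r a
    · rw [ind_left, glue_left]; exact hL1 n r a
    · rw [ind_right, glue_right]; exact hR1 n r a
  · intro e
    rcases edge_cases e with ⟨a, rfl⟩ | ⟨a, n, rfl⟩ | ⟨a, n, rfl⟩
    · rw [ind_center, glue_center]; exact hC2 a
    · rw [ind_left, glue_left]; exact hL2 n a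
    · rw [ind_right, glue_right]; exact hR2 n a
  · intro r e
    rcases edge_cases e with ⟨a, rfl⟩ | ⟨a, n, rfl⟩ | ⟨a, n, rfl⟩
    · rw [ind_center, glue_center]; exact hC3 r a
    · rw [ind_left, glue_left]; exact hL3 n r a
    · rw [ind_right, glue_right]; exact hR3 n r a
  · rw [LIM_eq_glue]
    simp only [eC, eL, eR, ← hC4, ← hL4, ← hR4]
    ext r e
    rcases edge_cases e with ⟨a, rfl⟩ | ⟨a, n, rfl⟩ | ⟨a, n, rfl⟩
    · rw [glue_center]; rfl
    · rw [glue_left]; rfl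
    · rw [glue_right]; rfl
end
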